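/- arXiv:2102.02360 — 3 statements merged into one kernel-verified Lean document; each statement's English description precedes it below -/
import Mathlib

section
/- Let q be a real number with q > 0 and q ≠ 1, let k_0 and d_1 be integers with 1 ≤ k_0 ≤ d_1, and let d_0 be an arbitrary integer. With f(d_0, d, k) defined as the sum over all integers m ≥ 1, n_1 > … > n_m > 0 and k_1, …, k_m > 0 with k_1 + … + k_m = k and n_1 k_1 + … + n_m k_m = d of ∏_{i=1}^{m} [2d_0 − 2∑_{j=1}^{i−1}(n_j − n_i)k_j choose k_i]_q (so in particular f(d_0, 0, 0) = 1 and f(d_0, d, 0) = 0 for d ≥ 1), the following recursion holds: f(d_0, d_1, k_0) = ∑_{k=1}^{k_0} ∑_{n=1}^{⌊d_1/k_0⌋} f(d_0, d_1 − n k_0, k_0 − k) · [2d_0 − 2d_1 + 2 n k_0 choose k]_q, obtained by classifying the terms of f according to the smallest part n_m = n and the corresponding multiplicity k_m = k. -/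
attribute [local instance] Classical.propDecidable

/-- The symmetric ("physics convention") `q`-integer `[a]_q = q^{a/2} - q^{-a/2}`. -/
noncomputable def qint (q : ℝ) (a : ℤ) : ℝ :=
  q ^ ((a : ℝ) / 2) - q ^ (-((a : ℝ) / 2))

/-- The `q`-binomial coefficient
`[n choose k]_q = ([n]_q [n-1]_q ⋯ [n-k+1]_q)/([k]_q [k-1]_q ⋯ [1]_q)` for `0 ≤ k ≤ n`,
and `0` otherwise. -/
noncomputable def qbinom (q : ℝ) (n k : ℤ) : ℝ :=
  if 0 ≤ k ∧ k ≤ n then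
    (∏ i ∈ Finset.range k.toNat, qint q (n - (i : ℤ))) /
      ∏ i ∈ Finset.range k.toNat, qint q (k - (i : ℤ))
  else 0

/-- `f(d0, d, k0)`: the sum over all `m`, `n_1 > n_2 > ⋯ > n_m > 0`,
`k_1, …, k_m > 0` with `k_1 + ⋯ + k_m = k0` and `n_1 k_1 + ⋯ + n_m k_m = d` of
`∏_{i=1}^m [2 d0 - 2 ∑_{j<i} (n_j - n_i) k_j choose k_i]_q`, where the empty
sequence `m = 0` is allowed (contributing an empty product `1` exactly when
`d = 0` and `k0 = 0`); hence in particular `f(d0, 0, 0) = 1` and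
`f(d0, d, 0) = 0` for `d ≥ 1`, while for `k0 ≥ 1` only terms with `m ≥ 1` occur.
(Each `n_i`, `k_i` satisfies `1 ≤ n_i, k_i ≤ d` and `m ≤ d`, so the finite ranges
below lose no terms.) -/
noncomputable def f (q : ℝ) (d0 d k0 : ℤ) : ℝ :=
  ∑ m ∈ Finset.range (d.toNat + 1),
    ∑ p ∈ (Fintype.piFinset (fun _ : Fin m => Finset.Icc (1 : ℤ) d) ×ˢ
           Fintype.piFinset (fun _ : Fin m => Finset.Icc (1 : ℤ) d)).filter
          (fun p => StrictAnti p.1 ∧ (∑ i, p.2 i) = k0 ∧ (∑ i, p.1 i * p.2 i) = d),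
      ∏ i : Fin m,
        qbinom q
          (2 * d0 - 2 * ∑ j ∈ Finset.univ.filter (fun j => j < i),
            (p.1 j - p.1 i) * p.2 j)
          (p.2 i)

/-!
Subtracting the smallest part `n` from all the other parts and deleting it, together with its
multiplicity `k`, turns a partition of `d` into `K` parts into a partition of `d - n * K` into
`K - k` parts, and this is reversible. The weight of the `i`-th part only involves the differences
`n_j - n_i`, which the shift preserves, and for the deleted part the sum `∑ (n_j - n) * k_j` is the
size `d - n * K` of the new partition.
-/

theorem strictAnti_snoc {α : Type*} [Preorder α] {m : ℕ} {x : Fin m → α} {a : α} :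
    StrictAnti (Fin.snoc x a : Fin (m + 1) → α) ↔ (∀ i, a < x i) ∧ StrictAnti x := by
  refine ⟨fun h => ⟨fun i => ?_, fun i j hij => ?_⟩, fun ⟨ha, hx⟩ i j hij => ?_⟩
  · simpa using h (Fin.castSucc_lt_last i)
  · simpa using h (Fin.castSucc_lt_castSucc_iff.2 hij)
  · obtain ⟨i, rfl⟩ := Fin.exists_castSucc_eq.2 (Fin.ne_last_of_lt hij)
    cases j using Fin.lastCases with
    | last => simpa using ha i
    | cast j => simpa using hx (Fin.castSucc_lt_castSucc_iff.1 hij)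

/-- Candidate partitions with `m` distinct parts, in frequency notation: `p.1 i` is the size of the
`i`-th distinct part and `p.2 i` its multiplicity. -/
abbrev PartSeq (m : ℕ) : Type := (Fin m → ℤ) × (Fin m → ℤ)

/-- The partitions of `d` into `K` parts having exactly `m` distinct part sizes, listed in
decreasing order. The upper bounds `d` only serve to make the set finite, see
`mem_freqPartitions`. -/
noncomputable def freqPartitions (m : ℕ) (d K : ℤ) : Finset (PartSeq m) :=
  (Fintype.piFinset (fun _ : Fin m => Finset.Icc (1 : ℤ) d) ×ˢ
    Fintype.piFinset (fun _ : Fin m => Finset.Icc (1 : ℤ) d)).filter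
      (fun p => StrictAnti p.1 ∧ (∑ i, p.2 i) = K ∧ (∑ i, p.1 i * p.2 i) = d)

section FreqPartitions

variable {m : ℕ} {d K n k : ℤ} {p : PartSeq m}

theorem mem_freqPartitions :
    p ∈ freqPartitions m d K ↔ (∀ i, 1 ≤ p.1 i) ∧ (∀ i, 1 ≤ p.2 i) ∧ StrictAnti p.1 ∧
      (∑ i, p.2 i) = K ∧ (∑ i, p.1 i * p.2 i) = d := by
  simp only [freqPartitions, Finset.mem_filter, Finset.mem_product, Fintype.mem_piFinset,
    Finset.mem_Icc]
  refine ⟨fun ⟨⟨hn, hk⟩, h⟩ => ⟨fun i => (hn i).1, fun i => (hk i).1, h⟩,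
    fun ⟨hn, hk, hanti, hK, hd⟩ => ?_⟩
  have mul_le (i : Fin m) : p.1 i * p.2 i ≤ d := hd ▸
    Finset.single_le_sum (f := fun i => p.1 i * p.2 i)
      (fun j _ => mul_nonneg (by linarith [hn j]) (by linarith [hk j])) (Finset.mem_univ i)
  exact ⟨⟨fun i => ⟨hn i, by nlinarith [hn i, hk i, mul_le i]⟩,
    fun i => ⟨hk i, by nlinarith [hn i, hk i, mul_le i]⟩⟩, hanti, hK, hd⟩

theorem card_le_of_mem_freqPartitions (hp : p ∈ freqPartitions m d K) : (m : ℤ) ≤ K := by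
  obtain ⟨-, hk, -, hK, -⟩ := mem_freqPartitions.1 hp
  simpa [hK] using Finset.card_nsmul_le_sum Finset.univ p.2 1 fun i _ => hk i

theorem le_of_mem_freqPartitions (hp : p ∈ freqPartitions m d K) : K ≤ d := by
  obtain ⟨hn, hk, -, rfl, rfl⟩ := mem_freqPartitions.1 hp
  exact Finset.sum_le_sum fun i _ => le_mul_of_one_le_left (by linarith [hk i]) (hn i)

theorem freqPartitions_zero (hK : K ≠ 0) : freqPartitions 0 d K = ∅ := by
  ext p
  simp [mem_freqPartitions, hK.symm]

/-- Raise all parts of `p` by `n`, then append the new smallest part `n` with multiplicity `k`. -/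
def appendPart (n k : ℤ) (p : PartSeq m) : PartSeq (m + 1) :=
  (Fin.snoc (α := fun _ => ℤ) (fun i => p.1 i + n) n, Fin.snoc (α := fun _ => ℤ) p.2 k)

/-- `appendPart` as a bijection from triples `⟨k, n, p⟩`; its inverse removes the smallest part
and lowers all other parts by it. -/
def appendPartEquiv (m : ℕ) : ((_ : ℤ) × (_ : ℤ) × PartSeq m) ≃ PartSeq (m + 1) where
  toFun x := appendPart x.2.1 x.1 x.2.2
  invFun p := ⟨p.2 (Fin.last m), p.1 (Fin.last m),
    fun i => p.1 i.castSucc - p.1 (Fin.last m), fun i => p.2 i.castSucc⟩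
  left_inv x := by simp [appendPart]
  right_inv p := by
    ext i <;> cases i using Fin.lastCases <;> simp [appendPart]

theorem appendPart_mem_freqPartitions_iff :
    appendPart n k p ∈ freqPartitions (m + 1) d K ↔
      1 ≤ k ∧ 1 ≤ n ∧ p ∈ freqPartitions m (d - n * K) (K - k) := by
  have strictAnti_iff : StrictAnti (fun i => p.1 i + n) ↔ StrictAnti p.1 := by
    simp [StrictAnti]
  have sum_shift : ∑ i, (p.1 i + n) * p.2 i = ∑ i, p.1 i * p.2 i + n * ∑ i, p.2 i := by
    simp only [add_mul, Finset.sum_add_distrib, Finset.mul_sum]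
  simp only [mem_freqPartitions, appendPart, strictAnti_snoc, strictAnti_iff,
    Fin.forall_fin_succ', Fin.sum_univ_castSucc, Fin.snoc_castSucc, Fin.snoc_last, sum_shift,
    lt_add_iff_pos_left, Order.one_le_iff_pos]
  constructor
  · rintro ⟨⟨-, hn⟩, ⟨hk, hk'⟩, ⟨hpos, hanti⟩, hK, hd⟩
    exact ⟨hk', hn, hpos, hk, hanti, by linarith, by rw [← hK, ← hd]; ring⟩
  · rintro ⟨hk', hn, hpos, hk, hanti, hK, hd⟩
    exact ⟨⟨fun i => by linarith [hpos i], hn⟩, ⟨hk, hk'⟩, ⟨hpos, hanti⟩, by linarith,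
      by rw [hd, hK]; ring⟩

theorem appendPart_mem_freqPartitions_iff_mem_Icc (hK : 1 ≤ K) :
    appendPart n k p ∈ freqPartitions (m + 1) d K ↔
      k ∈ Finset.Icc 1 K ∧ n ∈ Finset.Icc 1 (d / K) ∧
        p ∈ freqPartitions m (d - n * K) (K - k) := by
  rw [appendPart_mem_freqPartitions_iff, Finset.mem_Icc, Finset.mem_Icc,
    Int.le_ediv_iff_mul_le (by omega)]
  refine ⟨fun ⟨hk, hn, hp⟩ => ?_, fun ⟨hk, hn, hp⟩ => ⟨hk.1, hn.1, hp⟩⟩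
  have := card_le_of_mem_freqPartitions hp
  have := le_of_mem_freqPartitions hp
  exact ⟨⟨hk, by omega⟩, ⟨hn, by omega⟩, hp⟩

end FreqPartitions

section PartitionSum

variable {R : Type*} [CommSemiring R]

/-- The weight of a partition whose `i`-th distinct part, of multiplicity `k_i`, contributes the
factor `w (∑_{j<i} (n_j - n_i) k_j) k_i`. -/
noncomputable def partitionWeight (w : ℤ → ℤ → R) {m : ℕ} (p : PartSeq m) : R :=
  ∏ i : Fin m,
    w (∑ j ∈ Finset.univ.filter (fun j => j < i), (p.1 j - p.1 i) * p.2 j) (p.2 i)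

/-- The sum of the weights of all partitions of `d` into `K` parts: `f` with the `q`-binomial
coefficients replaced by arbitrary weights. -/
noncomputable def partitionSum (w : ℤ → ℤ → R) (d K : ℤ) : R :=
  ∑ m ∈ Finset.range (d.toNat + 1), ∑ p ∈ freqPartitions m d K, partitionWeight w p

theorem f_eq_partitionSum (q : ℝ) (d0 d K : ℤ) :
    f q d0 d K = partitionSum (fun s k => qbinom q (2 * d0 - 2 * s) k) d K :=
  rfl

theorem partitionWeight_appendPart (w : ℤ → ℤ → R) {m : ℕ} (n k : ℤ) (p : PartSeq m) :
    partitionWeight w (appendPart n k p) =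
      partitionWeight w p * w (∑ i, p.1 i * p.2 i) k := by
  have last_not_lt (i : Fin m) : ¬ Fin.last m < i.castSucc := (Fin.le_last _).not_gt
  simp [partitionWeight, appendPart, Fin.prod_univ_castSucc, Finset.sum_filter,
    Fin.sum_univ_castSucc, Fin.castSucc_lt_last, last_not_lt]

theorem partitionSum_eq_sum_range (w : ℤ → ℤ → R) {d : ℤ} (K : ℤ) {M : ℕ} (hM : d.toNat < M) :
    partitionSum w d K =
      ∑ m ∈ Finset.range M, ∑ p ∈ freqPartitions m d K, partitionWeight w p := by
  refine Finset.sum_subset (Finset.range_subset_range.2 hM) fun m _ hm =>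
    Finset.sum_eq_zero fun p hp => ?_
  have := card_le_of_mem_freqPartitions hp
  have := le_of_mem_freqPartitions hp
  rw [Finset.mem_range] at hm
  omega

theorem sum_freqPartitions_succ (w : ℤ → ℤ → R) (m : ℕ) (d : ℤ) {K : ℤ} (hK : 1 ≤ K) :
    ∑ p ∈ freqPartitions (m + 1) d K, partitionWeight w p =
      ∑ k ∈ Finset.Icc 1 K, ∑ n ∈ Finset.Icc 1 (d / K),
        (∑ p ∈ freqPartitions m (d - n * K) (K - k), partitionWeight w p) * w (d - n * K) k := by
  simp only [Finset.sum_mul, Finset.sum_sigma']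
  refine (Finset.sum_equiv (appendPartEquiv m) (fun x => ?_) fun x hx => ?_).symm
  · rw [Finset.mem_sigma, Finset.mem_sigma]
    exact (appendPart_mem_freqPartitions_iff_mem_Icc hK).symm
  · simp only [Finset.mem_sigma] at hx
    obtain ⟨-, -, -, -, size_eq⟩ := mem_freqPartitions.1 hx.2.2
    exact size_eq ▸ (partitionWeight_appendPart w x.2.1 x.1 x.2.2).symm

theorem f_recursion_general (w : ℤ → ℤ → R) (d : ℤ) {K : ℤ} (hK : 1 ≤ K) :
    partitionSum w d K =
      ∑ k ∈ Finset.Icc 1 K, ∑ n ∈ Finset.Icc 1 (d / K),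
        partitionSum w (d - n * K) (K - k) * w (d - n * K) k := by
  have extend_range (k : ℤ) {n : ℤ} (hn : n ∈ Finset.Icc 1 (d / K)) :
      partitionSum w (d - n * K) (K - k) =
        ∑ m ∈ Finset.range (d.toNat + 1),
          ∑ p ∈ freqPartitions m (d - n * K) (K - k), partitionWeight w p := by
    have : 0 ≤ n * K := mul_nonneg (by linarith [(Finset.mem_Icc.1 hn).1]) (by linarith)
    exact partitionSum_eq_sum_range w _ (by omega)
  rw [partitionSum_eq_sum_range w K (M := d.toNat + 1 + 1) (by omega), Finset.sum_range_succ',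
    freqPartitions_zero (by omega), Finset.sum_empty, add_zero]
  simp only [sum_freqPartitions_succ w _ d hK]
  rw [Finset.sum_comm]
  refine Finset.sum_congr rfl fun k _ => ?_
  rw [Finset.sum_comm]
  exact Finset.sum_congr rfl fun n hn => by rw [extend_range k hn, Finset.sum_mul]

end PartitionSum

/-- The recursion for `f` obtained by classifying the terms according to the smallest
part `n_m = n` and the corresponding multiplicity `k_m = k`: for `1 ≤ k0 ≤ d1` and
arbitrary `d0`,
`f(d0, d1, k0) = ∑_{k=1}^{k0} ∑_{n=1}^{⌊d1/k0⌋}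
  f(d0, d1 - n k0, k0 - k) · [2d0 - 2d1 + 2 n k0 choose k]_q`. -/
theorem f_recursion (q : ℝ) (hq0 : 0 < q) (hq1 : q ≠ 1)
    (k0 d1 d0 : ℤ) (hk0 : 1 ≤ k0) (hk0d1 : k0 ≤ d1) :
    f q d0 d1 k0
    = ∑ k ∈ Finset.Icc (1 : ℤ) k0, ∑ n ∈ Finset.Icc (1 : ℤ) (d1 / k0),
        f q d0 (d1 - n * k0) (k0 - k) * qbinom q (2 * d0 - 2 * d1 + 2 * n * k0) k := by
  simp only [f_eq_partitionSum]
  convert f_recursion_general (fun s k => qbinom q (2 * d0 - 2 * s) k) d1 hk0 using 6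
  ring
end

section
/- Let q be a real number with q > 0 and q ≠ 1, and let d_0 and d_1 be integers with d_0 > d_1 ≥ 1. Then ∑_{j=1}^{d_1} ([2d_0]_q/[j]_q) · [d_0 + d_1 + j − 1 choose j − 1]_q · [d_0 − d_1 − 1 choose j − 1]_q · [2d_1 choose d_1 − j]_q = ([2d_0]_q/[d_0]_q) · [d_0 choose d_1]_q · [d_0 + d_1 − 1 choose d_0]_q. (This is the q-binomial identity, evaluated via the q-Pfaff–Saalschütz summation, to which the first main theorem reduces after substituting the closed form of f.) -/
attribute [local instance] Classical.propDecidable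

/-!
The symmetric `q`-integers satisfy `[u+s][v+s] - [u][v] = [s][u+v+s]`. Applied twice, this turns
the `q`-Pfaff–Saalschütz sum with `n + 2` summands into an explicit multiple of the one with `n + 1`
summands, up to terms that cancel between the summands; no power of `q` appears because a balanced
`₃φ₂` at argument `q`, rewritten in symmetric `q`-integers, has argument `1`. The required identity
is the case of the denominator parameters `2` and `d1 + 2` of the resulting closed form.
-/

open Finset

section QInt

lemma qint_zero (q : ℝ) : qint q 0 = 0 := by
  simp [qint]

lemma qint_neg (q : ℝ) (a : ℤ) : qint q (-a) = -qint q a := by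
  simp [qint, neg_div]

variable {q : ℝ}

lemma qint_ne_zero (hq : 0 < q) (hq1 : q ≠ 1) {a : ℤ} (ha : a ≠ 0) : qint q a ≠ 0 := by
  intro h
  have hexp : (a : ℝ) / 2 = -((a : ℝ) / 2) := (Real.rpow_right_inj hq hq1).mp (sub_eq_zero.mp h)
  exact ha (by exact_mod_cast (by linarith : (a : ℝ) = 0))

lemma qint_mul_qint (hq : 0 < q) (a b : ℤ) :
    qint q a * qint q b =
      q ^ (((a + b : ℤ) : ℝ) / 2) + q ^ (-(((a + b : ℤ) : ℝ) / 2)) -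
        (q ^ (((a - b : ℤ) : ℝ) / 2) + q ^ (-(((a - b : ℤ) : ℝ) / 2))) := by
  simp only [qint, sub_mul, mul_sub, ← Real.rpow_add hq]
  push_cast
  ring_nf

lemma qint_add_mul_qint_add_sub (hq : 0 < q) (u v s : ℤ) :
    qint q (u + s) * qint q (v + s) - qint q u * qint q v = qint q s * qint q (u + v + s) := by
  simp only [qint_mul_qint hq]
  push_cast
  ring_nf

lemma qint_mul_sub_qint_add_mul_qint_sub (hq : 0 < q) (u v s : ℤ) :
    qint q u * qint q v - qint q (u + s) * qint q (v - s) = qint q s * qint q (u - v + s) := by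
  have h := qint_add_mul_qint_add_sub hq u (-v) s
  rw [show -v + s = -(v - s) by ring, qint_neg, qint_neg, ← sub_eq_add_neg] at h
  linear_combination h

end QInt

section QChoose

/-- The falling `q`-factorial `[n]_q [n-1]_q ⋯ [n-k+1]_q`, for an arbitrary integer `n`. In
particular `qDescFactorial q k k` is the `q`-factorial of `k`. -/
noncomputable def qDescFactorial (q : ℝ) (n : ℤ) (k : ℕ) : ℝ :=
  ∏ i ∈ range k, qint q (n - i)

/-- The `q`-binomial coefficient with an arbitrary integer upper argument. Unlike `qbinom` it does
not vanish for `n < 0`, so that its recurrences hold without side conditions. -/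
noncomputable def qchoose (q : ℝ) (n : ℤ) (k : ℕ) : ℝ :=
  qDescFactorial q n k / qDescFactorial q k k

lemma qDescFactorial_zero (q : ℝ) (n : ℤ) : qDescFactorial q n 0 = 1 :=
  prod_range_zero _

lemma qDescFactorial_add (q : ℝ) (n : ℤ) (k l : ℕ) :
    qDescFactorial q n (k + l) = qDescFactorial q n k * qDescFactorial q (n - k) l := by
  simp only [qDescFactorial, prod_range_add, Nat.cast_add, sub_sub]

lemma qDescFactorial_succ (q : ℝ) (n : ℤ) (k : ℕ) :
    qDescFactorial q n (k + 1) = qDescFactorial q n k * qint q (n - k) :=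
  prod_range_succ _ k

lemma qDescFactorial_succ' (q : ℝ) (n : ℤ) (k : ℕ) :
    qDescFactorial q n (k + 1) = qint q n * qDescFactorial q (n - 1) k := by
  rw [add_comm, qDescFactorial_add, qDescFactorial_succ]
  simp [qDescFactorial_zero]

lemma qDescFactorial_self_succ (q : ℝ) (k : ℕ) :
    qDescFactorial q (k + 1) (k + 1) = qint q (k + 1) * qDescFactorial q k k := by
  rw [qDescFactorial_succ', add_sub_cancel_right]

lemma qDescFactorial_eq_zero_of_lt (q : ℝ) {n : ℤ} {k : ℕ} (hn : 0 ≤ n) (hnk : n < k) :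
    qDescFactorial q n k = 0 := by
  lift n to ℕ using hn
  refine prod_eq_zero (mem_range.mpr (Nat.cast_lt.mp hnk)) ?_
  rw [sub_self, qint_zero]

lemma qbinom_natCast_right (q : ℝ) {n : ℤ} (hn : 0 ≤ n) (k : ℕ) :
    qbinom q n k = qchoose q n k := by
  by_cases hk : (k : ℤ) ≤ n
  · rw [qbinom, if_pos ⟨k.cast_nonneg, hk⟩, Int.toNat_natCast]
    rfl
  · rw [qbinom, if_neg (fun h => hk h.2), qchoose,
      qDescFactorial_eq_zero_of_lt q hn (not_le.mp hk), zero_div]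

variable {q : ℝ}

lemma qDescFactorial_self_ne_zero (hq : 0 < q) (hq1 : q ≠ 1) (k : ℕ) :
    qDescFactorial q k k ≠ 0 := by
  refine prod_ne_zero_iff.mpr fun i hi => qint_ne_zero hq hq1 ?_
  have := mem_range.mp hi
  omega

lemma qchoose_zero_right (q : ℝ) (n : ℤ) : qchoose q n 0 = 1 := by
  simp [qchoose, qDescFactorial_zero]

lemma qchoose_mul_qDescFactorial_self (hq : 0 < q) (hq1 : q ≠ 1) (n : ℤ) (k : ℕ) :
    qchoose q n k * qDescFactorial q k k = qDescFactorial q n k :=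
  div_mul_cancel₀ _ (qDescFactorial_self_ne_zero hq hq1 k)

lemma qchoose_succ_mul (hq : 0 < q) (hq1 : q ≠ 1) (n : ℤ) (k : ℕ) :
    qchoose q n (k + 1) * qint q (k + 1) = qchoose q n k * qint q (n - k) := by
  have hk : qint q ((k : ℤ) + 1) ≠ 0 := qint_ne_zero hq hq1 (by omega)
  have hfact := qDescFactorial_self_ne_zero hq hq1 k
  rw [qchoose, qchoose, qDescFactorial_succ, Nat.cast_succ, qDescFactorial_self_succ]
  field_simp

lemma qchoose_succ_succ_mul (hq : 0 < q) (hq1 : q ≠ 1) (n : ℤ) (k : ℕ) :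
    qchoose q (n + 1) (k + 1) * qint q (k + 1) = qint q (n + 1) * qchoose q n k := by
  have hk : qint q ((k : ℤ) + 1) ≠ 0 := qint_ne_zero hq hq1 (by omega)
  have hfact := qDescFactorial_self_ne_zero hq hq1 k
  rw [qchoose, qchoose, qDescFactorial_succ', add_sub_cancel_right, Nat.cast_succ,
    qDescFactorial_self_succ]
  field_simp

lemma qchoose_symm_add (hq : 0 < q) (hq1 : q ≠ 1) (k l : ℕ) :
    qchoose q (k + l) k = qchoose q (k + l) l := by
  have hsplit : qDescFactorial q (k + l) k * qDescFactorial q l l =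
      qDescFactorial q (k + l) l * qDescFactorial q k k := by
    have hk := qDescFactorial_add q (k + l) k l
    have hl := qDescFactorial_add q (k + l) l k
    rw [add_sub_cancel_left] at hk
    rw [add_sub_cancel_right, add_comm l k] at hl
    rw [← hk, ← hl]
  rwa [qchoose, qchoose, div_eq_div_iff (qDescFactorial_self_ne_zero hq hq1 k)
    (qDescFactorial_self_ne_zero hq hq1 l)]

lemma qbinom_add_natCast_self (hq : 0 < q) (hq1 : q ≠ 1) {n : ℤ} (hn : 0 ≤ n) (k : ℕ) :
    qbinom q (n + k) n = qchoose q (n + k) k := by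
  lift n to ℕ using hn
  rw [qbinom_natCast_right q (by omega), qchoose_symm_add hq hq1]

end QChoose

section PfaffSaalschutz

/-- The `k`-th summand of the `q`-Pfaff–Saalschütz sum with numerator parameters `x`, `-z`, `-n`
and denominator parameters `c`, `1 - n + w`, where `n = k + l`, multiplied by `[c]_q ⋯ [c+n-1]_q`
and by `qchoose q w n`, so that no denominator depends on `c` or `w`. The series is balanced when
`w = x - z - c`. -/
noncomputable def saalschutzTerm (q : ℝ) (x z w c : ℤ) (k l : ℕ) : ℝ :=
  qchoose q (x + k - 1) k * qchoose q w l *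
    (qDescFactorial q z k * qDescFactorial q (c + k + l - 1) l)

variable {q : ℝ}

lemma saalschutzTerm_succ_right (hq : 0 < q) (hq1 : q ≠ 1) (x z w c : ℤ) (k l : ℕ) :
    saalschutzTerm q x z w c k (l + 1) * qint q (l + 1) =
      qint q (w - l) * qint q (c + k + l) * saalschutzTerm q x z w c k l := by
  have hw := qchoose_succ_mul hq hq1 w l
  have hc := qDescFactorial_succ' q (c + k + l) l
  rw [saalschutzTerm, saalschutzTerm,
    show c + k + (l + 1 : ℕ) - 1 = c + k + l by push_cast; ring, hc]
  linear_combination qchoose q (x + k - 1) k * qDescFactorial q z k * qint q (c + k + l) *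
    qDescFactorial q (c + k + l - 1) l * hw

lemma saalschutzTerm_pred_succ_right (hq : 0 < q) (hq1 : q ≠ 1) (x z w c : ℤ) (k l : ℕ) :
    saalschutzTerm q x z w (c - 1) k (l + 1) * qint q (l + 1) =
      qint q (w - l) * qint q (c + k - 1) * saalschutzTerm q x z w c k l := by
  have hw := qchoose_succ_mul hq hq1 w l
  have hc := qDescFactorial_succ q (c + k + l - 1) l
  rw [show c + k + l - 1 - l = c + k - 1 by ring] at hc
  rw [saalschutzTerm, saalschutzTerm,
    show c - 1 + k + (l + 1 : ℕ) - 1 = c + k + l - 1 by push_cast; ring, hc]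
  linear_combination qchoose q (x + k - 1) k * qDescFactorial q z k * qint q (c + k - 1) *
    qDescFactorial q (c + k + l - 1) l * hw

lemma saalschutzTerm_pred_succ_left (hq : 0 < q) (hq1 : q ≠ 1) (x z w c : ℤ) (k l : ℕ) :
    qint q (k + 1) * saalschutzTerm q x z w (c - 1) (k + 1) l =
      qint q (x + k) * qint q (z - k) * saalschutzTerm q x z w c k l := by
  have hx := qchoose_succ_succ_mul hq hq1 (x + k - 1) k
  have hz := qDescFactorial_succ q z k
  rw [sub_add_cancel] at hx
  rw [saalschutzTerm, saalschutzTerm, show x + (k + 1 : ℕ) - 1 = x + k by push_cast; ring,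
    show c - 1 + (k + 1 : ℕ) + l - 1 = c + k + l - 1 by push_cast; ring, hz]
  linear_combination qchoose q w l * qDescFactorial q z k * qint q (z - k) *
    qDescFactorial q (c + k + l - 1) l * hx

lemma saalschutzTerm_pred_zero_right (q : ℝ) (x z w c : ℤ) (k : ℕ) :
    saalschutzTerm q x z w (c - 1) k 0 = saalschutzTerm q x z w c k 0 := by
  simp only [saalschutzTerm, qDescFactorial_zero]

lemma qint_saalschutz_identity (hq : 0 < q) (x z c k l : ℤ) :
    (qint q (x - c - (k + l)) * qint q (c + z + (k + l)) - qint q (x + k) * qint q (z - k)) *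
        qint q (l + 1) =
      (qint q (k + l + 1) * qint q (c + k + l) - qint q k * qint q (c + k - 1)) *
        qint q (x - z - c - l) := by
  have hxz := qint_mul_sub_qint_add_mul_qint_sub hq
    (x - c - (k + l)) (c + z + (k + l)) (c + 2 * k + l)
  have hkl := qint_add_mul_qint_add_sub hq k (c + k - 1) (l + 1)
  rw [show x - c - (k + l) + (c + 2 * k + l) = x + k by ring,
    show c + z + (k + l) - (c + 2 * k + l) = z - k by ring,
    show x - c - (k + l) - (c + z + (k + l)) + (c + 2 * k + l) = x - z - c - l by ring] at hxz
  rw [show k + (l + 1) = k + l + 1 by ring, show c + k - 1 + (l + 1) = c + k + l by ring,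
    show k + (c + k - 1) + (l + 1) = c + 2 * k + l by ring] at hkl
  linear_combination qint q (l + 1) * hxz - qint q (x - z - c - l) * hkl

lemma saalschutzTerm_recurrence (hq : 0 < q) (hq1 : q ≠ 1) (x z c : ℤ) (k l : ℕ) :
    qint q (k + l + 1) * saalschutzTerm q x z (x - z - c) c k (l + 1) +
        qint q (k + 1) * saalschutzTerm q x z (x - z - c) (c - 1) (k + 1) l =
      qint q (x - c - (k + l)) * qint q (c + z + (k + l)) * saalschutzTerm q x z (x - z - c) c k l +
        qint q k * saalschutzTerm q x z (x - z - c) (c - 1) k (l + 1) := by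
  have hl : qint q ((l : ℤ) + 1) ≠ 0 := qint_ne_zero hq hq1 (by omega)
  have hright := saalschutzTerm_succ_right hq hq1 x z (x - z - c) c k l
  have hpred := saalschutzTerm_pred_succ_right hq hq1 x z (x - z - c) c k l
  have hleft := saalschutzTerm_pred_succ_left hq hq1 x z (x - z - c) c k l
  have hbal := qint_saalschutz_identity hq x z c k l
  apply mul_right_cancel₀ hl
  linear_combination qint q (k + l + 1) * hright - qint q k * hpred + qint q (l + 1) * hleft -
    saalschutzTerm q x z (x - z - c) c k l * hbal

lemma sum_saalschutzTerm_succ (hq : 0 < q) (hq1 : q ≠ 1) (x z c : ℤ) (n : ℕ) :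
    qint q (n + 1) * ∑ p ∈ antidiagonal (n + 1), saalschutzTerm q x z (x - z - c) c p.1 p.2 =
      qint q (x - c - n) * qint q (c + z + n) *
        ∑ p ∈ antidiagonal n, saalschutzTerm q x z (x - z - c) c p.1 p.2 := by
  set T := saalschutzTerm q x z (x - z - c) c
  set T' := saalschutzTerm q x z (x - z - c) (c - 1)
  have hrec : ∑ p ∈ antidiagonal n,
        (qint q (n + 1) * T p.1 (p.2 + 1) + qint q (p.1 + 1) * T' (p.1 + 1) p.2) =
      ∑ p ∈ antidiagonal n,
        (qint q (x - c - n) * qint q (c + z + n) * T p.1 p.2 + qint q p.1 * T' p.1 (p.2 + 1)) := by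
    refine sum_congr rfl fun p hp => ?_
    have hn : (n : ℤ) = p.1 + p.2 := by exact_mod_cast (mem_antidiagonal.mp hp).symm
    rw [hn]
    exact saalschutzTerm_recurrence hq hq1 x z c p.1 p.2
  -- Splitting off the summand with first, resp. last, index `0` computes this sum in two ways.
  have hshift : ∑ p ∈ antidiagonal n, qint q (p.1 + 1) * T' (p.1 + 1) p.2 =
      qint q (n + 1) * T' (n + 1) 0 + ∑ p ∈ antidiagonal n, qint q p.1 * T' p.1 (p.2 + 1) := by
    have h := Nat.sum_antidiagonal_succ' (n := n) (f := fun p : ℕ × ℕ => qint q p.1 * T' p.1 p.2)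
    rw [Nat.sum_antidiagonal_succ] at h
    simpa [qint_zero] using h
  have hlast : T' (n + 1) 0 = T (n + 1) 0 := saalschutzTerm_pred_zero_right ..
  rw [sum_add_distrib, sum_add_distrib, hshift, hlast, ← mul_sum, ← mul_sum] at hrec
  rw [Nat.sum_antidiagonal_succ']
  linear_combination hrec

theorem sum_saalschutzTerm (hq : 0 < q) (hq1 : q ≠ 1) (x z c : ℤ) (n : ℕ) :
    ∑ p ∈ antidiagonal n, saalschutzTerm q x z (x - z - c) c p.1 p.2 =
      qchoose q (x - c) n * qDescFactorial q (c + z + n - 1) n := by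
  induction n with
  | zero => simp [saalschutzTerm, qchoose_zero_right, qDescFactorial_zero]
  | succ n ih =>
    have hn : qint q ((n : ℤ) + 1) ≠ 0 := qint_ne_zero hq hq1 (by omega)
    have hchoose := qchoose_succ_mul hq hq1 (x - c) n
    have hdesc := qDescFactorial_succ' q (c + z + n) n
    apply mul_left_cancel₀ hn
    rw [sum_saalschutzTerm_succ hq hq1, ih,
      show c + z + (n + 1 : ℕ) - 1 = c + z + n by push_cast; ring, hdesc]
    linear_combination -qint q (c + z + n) * qDescFactorial q (c + z + n - 1) n * hchoose

lemma saalschutzTerm_two (hq : 0 < q) (hq1 : q ≠ 1) (x z w : ℤ) (k l : ℕ) :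
    saalschutzTerm q x z w 2 k l = qDescFactorial q (k + l + 1) (k + l + 1) *
      (qchoose q (x + k - 1) k * qchoose q z k * qchoose q w l / qint q (k + 1)) := by
  have hk : qint q ((k : ℤ) + 1) ≠ 0 := qint_ne_zero hq hq1 (by omega)
  have hz := qchoose_mul_qDescFactorial_self hq hq1 z k
  have hfact : qDescFactorial q (k + l + 1) (k + l + 1) =
      qDescFactorial q (k + l + 1) l * (qint q (k + 1) * qDescFactorial q k k) := by
    rw [← qDescFactorial_self_succ, show k + l + 1 = l + (k + 1) by ring, qDescFactorial_add]
    congr 2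
    ring
  rw [saalschutzTerm, hfact, show 2 + (k : ℤ) + l - 1 = k + l + 1 by ring, ← hz]
  field_simp

theorem sum_qchoose_mul_qchoose_mul_qchoose_div (hq : 0 < q) (hq1 : q ≠ 1) {a : ℤ} (ha : a ≠ 0)
    (n : ℕ) :
    ∑ p ∈ antidiagonal n, qchoose q (a + n + 1 + p.1) p.1 * qchoose q (a - n - 2) p.1 *
        qchoose q (2 * (n + 1)) p.2 / qint q (p.1 + 1) =
      qchoose q a (n + 1) * qchoose q (a + n) n / qint q a := by
  have ha0 : qint q a ≠ 0 := qint_ne_zero hq hq1 ha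
  have hfact := qDescFactorial_self_ne_zero hq hq1 (n + 1)
  have hchoose := qchoose_mul_qDescFactorial_self hq hq1 a (n + 1)
  have hsum := sum_saalschutzTerm hq hq1 (a + n + 2) (a - n - 2) 2 n
  rw [qDescFactorial_succ' q a] at hchoose
  rw [show a + n + 2 - 2 = a + n by ring, show 2 + (a - n - 2) + n - 1 = a - 1 by ring,
    show a + n + 2 - (a - n - 2) - 2 = 2 * ((n : ℤ) + 1) by ring] at hsum
  have hterm : ∀ p ∈ antidiagonal n,
      saalschutzTerm q (a + n + 2) (a - n - 2) (2 * (n + 1)) 2 p.1 p.2 =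
        qDescFactorial q (n + 1 : ℕ) (n + 1) * (qchoose q (a + n + 1 + p.1) p.1 *
          qchoose q (a - n - 2) p.1 * qchoose q (2 * (n + 1)) p.2 / qint q (p.1 + 1)) := by
    intro p hp
    rw [saalschutzTerm_two hq hq1, show a + n + 2 + (p.1 : ℤ) - 1 = a + n + 1 + p.1 by ring,
      ← mem_antidiagonal.mp hp]
    push_cast
    rfl
  rw [sum_congr rfl hterm, ← mul_sum] at hsum
  apply mul_left_cancel₀ hfact
  rw [hsum, mul_div_assoc', eq_div_iff ha0]
  linear_combination -qchoose q (a + n) n * hchoose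

end PfaffSaalschutz

lemma sum_Icc_one_eq_sum_antidiagonal {M : Type*} [AddCommMonoid M] (f : ℤ → M) (n : ℕ) :
    ∑ j ∈ Icc (1 : ℤ) (n + 1), f j = ∑ p ∈ antidiagonal n, f (p.1 + 1) := by
  refine sum_nbij' (fun j => ((j - 1).toNat, (n + 1 - j).toNat)) (fun p => (p.1 : ℤ) + 1)
    ?_ ?_ ?_ ?_ (fun j hj => congrArg f ?_) <;>
  grind [HasAntidiagonal.mem_antidiagonal]

/-- The `q`-binomial identity (evaluated via the `q`-Pfaff–Saalschütz summation) to
which Theorem 2 of the paper reduces after substituting the closed form of `f`: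
for integers `d0 > d1 ≥ 1`,
`∑_{j=1}^{d1} ([2d0]_q/[j]_q) [d0+d1+j-1 choose j-1]_q [d0-d1-1 choose j-1]_q
   [2d1 choose d1-j]_q
 = ([2d0]_q/[d0]_q) [d0 choose d1]_q [d0+d1-1 choose d0]_q`. -/
theorem final_sum_dP1 (q : ℝ) (hq0 : 0 < q) (hq1 : q ≠ 1)
    (d0 d1 : ℤ) (hd1 : 1 ≤ d1) (hd0 : d1 < d0) :
    (∑ j ∈ Finset.Icc (1 : ℤ) d1,
      qint q (2 * d0) / qint q j * qbinom q (d0 + d1 + j - 1) (j - 1) *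
        qbinom q (d0 - d1 - 1) (j - 1) * qbinom q (2 * d1) (d1 - j))
    = qint q (2 * d0) / qint q d0 * qbinom q d0 d1 * qbinom q (d0 + d1 - 1) d0 := by
  obtain ⟨n, rfl⟩ : ∃ n : ℕ, d1 = n + 1 := ⟨(d1 - 1).toNat, by omega⟩
  have hterm : ∀ p ∈ antidiagonal n,
      qint q (2 * d0) / qint q (p.1 + 1) *
          qbinom q (d0 + (n + 1) + (p.1 + 1) - 1) (p.1 + 1 - 1) *
          qbinom q (d0 - (n + 1) - 1) (p.1 + 1 - 1) *
          qbinom q (2 * (n + 1)) (n + 1 - (p.1 + 1)) =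
        qint q (2 * d0) * (qchoose q (d0 + n + 1 + p.1) p.1 * qchoose q (d0 - n - 2) p.1 *
          qchoose q (2 * (n + 1)) p.2 / qint q (p.1 + 1)) := by
    intro p hp
    have hn : (n : ℤ) = p.1 + p.2 := by exact_mod_cast (mem_antidiagonal.mp hp).symm
    rw [show (n : ℤ) + 1 - (p.1 + 1) = p.2 by omega, add_sub_cancel_right,
      qbinom_natCast_right q (by omega), qbinom_natCast_right q (by omega),
      qbinom_natCast_right q (by omega)]
    ring_nf
  have hd0_choose : qbinom q d0 (n + 1) = qchoose q d0 (n + 1) :=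
    mod_cast qbinom_natCast_right q (by omega) (n + 1)
  rw [sum_Icc_one_eq_sum_antidiagonal, sum_congr rfl hterm, ← mul_sum,
    sum_qchoose_mul_qchoose_mul_qchoose_div hq0 hq1 (by omega),
    show d0 + ((n : ℤ) + 1) - 1 = d0 + n by ring, qbinom_add_natCast_self hq0 hq1 (by omega),
    hd0_choose]
  ring
end

section
/- Let q be a real number with q > 0 and q ≠ 1, and let d_1 and d_2 be integers with d_1 ≥ 1 and d_2 ≥ 1. Then ∑_{k_0=1}^{min(d_1, d_2)} ([2d_1 + d_2]_q/[k_0]_q) · [d_1 + d_2 + k_0 − 1 choose k_0 − 1]_q · [d_1 − 1 choose k_0 − 1]_q · [d_2 choose k_0]_q = ([2d_1 + d_2]_q/[d_2]_q) · ([d_1 + d_2 − 1 choose d_1]_q)^2. (This is the q-binomial identity, evaluated via the q-Pfaff–Saalschütz summation, to which the second main theorem reduces after substituting the closed form of f.) -/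
attribute [local instance] Classical.propDecidable

/-!
The theorem is a case of the `q`-Pfaff–Saalschütz summation, which in Nanjundiah's form reads
`∑_{i+j=n} [m-r+s choose i] [n+r-s choose j] [r+i choose m+n] = [r choose m] [s choose n]`.
Passing from `n` to `n + 1` multiplies the right-hand side by `[s-n]/[n+1]`. On the left-hand side,
Pascal's rule for the third coefficient absorbs `[s-n]`, and Pascal's rule for the second one
recollects the terms. All that is used about `[x]` is the Ptolemy identity.
For `m = d1`, `n = d2`, `r = s = d1 + d2 - 1` the symmetry and absorption rules turn the two sides
into those of the theorem.
-/

open Finset.HasAntidiagonal (antidiagonal mem_antidiagonal)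

/-- The Ptolemy identity for a bracket `f x = [x]`. It is satisfied by the symmetric `q`-numbers,
by `sin` and by the identity, so that statements about such brackets cover `q`-binomial and ordinary
binomial coefficients at once. -/
def IsPtolemaic {G K : Type*} [Add G] [Mul K] [Add K] (f : G → K) : Prop :=
  ∀ x y z, f (x + y) * f (y + z) = f x * f z + f y * f (x + y + z)

namespace IsPtolemaic

variable {G K : Type*} [AddGroup G] [CommRing K] [NoZeroDivisors K] {f : G → K}

theorem map_zero (hf : IsPtolemaic f) : f 0 = 0 := by
  simpa using hf 0 0 0

theorem map_neg (hf : IsPtolemaic f) (x : G) : f (-x) = -f x := by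
  have hx : f x * (f x + f (-x)) = 0 := by
    simpa [hf.map_zero, mul_add, mul_comm (f (-x))] using (hf x (-x) x).symm
  have hneg : f (-x) * (f x + f (-x)) = 0 := by
    simpa [hf.map_zero, mul_add, mul_comm (f x)] using (hf x (-x) (-x)).symm
  have hsq : (f x + f (-x)) ^ 2 = 0 := by linear_combination hx + hneg
  linear_combination pow_eq_zero_iff two_ne_zero |>.1 hsq

end IsPtolemaic

section GenChoose

variable {R K : Type*} [AddCommGroupWithOne R] [Field K] {f : R → K}

/-- The generalized (Fontené–Ward) binomial coefficient
`[r] [r - 1] ⋯ [r - k + 1] / ([1] [2] ⋯ [k])` of a bracket `f x = [x]`. The upper argument is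
arbitrary, so there is no truncation for negative or non-integral `r`. -/
def genChoose (f : R → K) (r : R) (k : ℕ) : K :=
  ∏ i ∈ Finset.range k, f (r - i) / f (i + 1)

@[simp]
theorem genChoose_zero_right (f : R → K) (r : R) : genChoose f r 0 = 1 := rfl

theorem genChoose_succ_right (f : R → K) (r : R) (k : ℕ) :
    genChoose f r (k + 1) = genChoose f r k * (f (r - k) / f (k + 1)) :=
  Finset.prod_range_succ _ _

theorem genChoose_succ_right_mul {k : ℕ} (hk : f (k + 1) ≠ 0) (r : R) :
    genChoose f r (k + 1) * f (k + 1) = genChoose f r k * f (r - k) := by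
  rw [genChoose_succ_right, mul_assoc, div_mul_cancel₀ _ hk]

theorem genChoose_add_one_left_mul (f : R → K) (r : R) (k : ℕ) :
    genChoose f (r + 1) k * f (r + 1 - k) = genChoose f r k * f (r + 1) := by
  induction k with
  | zero => simp
  | succ k ih =>
    have hshift : r + 1 - (k + 1 : ℕ) = r - k := by push_cast; abel
    rw [genChoose_succ_right, genChoose_succ_right, hshift]
    linear_combination (f (r - k) / f (k + 1)) * ih

theorem genChoose_add_one_succ_mul {k : ℕ} (hk : f (k + 1) ≠ 0) (r : R) :
    genChoose f (r + 1) (k + 1) * f (k + 1) = genChoose f r k * f (r + 1) := by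
  rw [genChoose_succ_right_mul hk, genChoose_add_one_left_mul]

theorem genChoose_natCast_eq_zero (h0 : f 0 = 0) {n k : ℕ} (hnk : n < k) :
    genChoose f n k = 0 :=
  Finset.prod_eq_zero (Finset.mem_range.2 hnk) (by rw [sub_self, h0, zero_div])

theorem prod_range_sub_eq_prod_range_add {M : Type*} [CommMonoid M] (g : R → M) (k l : ℕ) :
    ∏ i ∈ Finset.range k, g ((k + l : ℕ) - i) = ∏ i ∈ Finset.range k, g ((l + i : ℕ) + 1) := by
  rw [← Finset.prod_range_reflect]
  refine Finset.prod_congr rfl fun i hi => congrArg g ?_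
  have hle : i + 1 ≤ k := Finset.mem_range.1 hi
  rw [Nat.sub_sub, Nat.cast_sub (by omega)]
  push_cast
  abel

theorem genChoose_add_mul_prod (hne : ∀ n : ℕ, f (n + 1) ≠ 0) (k l : ℕ) :
    genChoose f (k + l : ℕ) k *
        ((∏ i ∈ Finset.range k, f (i + 1)) * ∏ i ∈ Finset.range l, f (i + 1)) =
      ∏ i ∈ Finset.range (k + l), f (i + 1) := by
  rw [genChoose, Finset.prod_div_distrib, ← mul_assoc,
    div_mul_cancel₀ _ (Finset.prod_ne_zero_iff.2 fun i _ => hne i),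
    prod_range_sub_eq_prod_range_add, mul_comm, add_comm k l, Finset.prod_range_add]

theorem genChoose_symm_add (hne : ∀ n : ℕ, f (n + 1) ≠ 0) (k l : ℕ) :
    genChoose f (k + l : ℕ) k = genChoose f (k + l : ℕ) l := by
  have hprod (n : ℕ) : ∏ i ∈ Finset.range n, f (i + 1) ≠ 0 :=
    Finset.prod_ne_zero_iff.2 fun i _ => hne i
  refine mul_right_cancel₀ (mul_ne_zero (hprod k) (hprod l)) ?_
  rw [genChoose_add_mul_prod hne, mul_comm (∏ i ∈ Finset.range k, f (i + 1)), add_comm k l,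
    genChoose_add_mul_prod hne]

theorem genChoose_succ_mul_symm (hne : ∀ n : ℕ, f (n + 1) ≠ 0) (k l : ℕ) :
    genChoose f (k + l + 1 : ℕ) (k + 1) * f (k + 1) =
      genChoose f (k + l + 1 : ℕ) (l + 1) * f (l + 1) := by
  have hsub : ((k + (l + 1) : ℕ) : R) - k = l + 1 := by push_cast; abel
  rw [genChoose_succ_right_mul (hne k), add_assoc, hsub, genChoose_symm_add hne]

/-- The parameter `x` is free: for `f = id`, the usual rule is the coefficient of `x`. -/
theorem IsPtolemaic.genChoose_pascal (hf : IsPtolemaic f) {k : ℕ} (hk : f (k + 1) ≠ 0)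
    (r x : R) :
    genChoose f (r + 1) (k + 1) * f x =
      genChoose f r (k + 1) * f (x - (k + 1)) + genChoose f r k * f (r - k + x) := by
  refine mul_right_cancel₀ hk ?_
  have hptolemy : f x * f (r + 1) = f (x - (k + 1)) * f (r - k) + f (k + 1) * f (r - k + x) := by
    have hsum : (k : R) + 1 + (r - k) = r + 1 := by abel
    have h := hf (x - (k + 1)) (k + 1) (r - k)
    rwa [sub_add_cancel, hsum, add_comm x] at h
  linear_combination f x * genChoose_add_one_succ_mul hk r
    - f (x - (k + 1)) * genChoose_succ_right_mul hk r + genChoose f r k * hptolemy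

theorem IsPtolemaic.mul_sum_antidiagonal_succ (hf : IsPtolemaic f)
    (hne : ∀ n : ℕ, f (n + 1) ≠ 0) (u v : R) (n : ℕ) (g : ℕ → K) :
    f (n + 1) * ∑ ij ∈ antidiagonal (n + 1),
        genChoose f u ij.1 * genChoose f (v + 1) ij.2 * g ij.1 =
      ∑ ij ∈ antidiagonal n, genChoose f u ij.1 * genChoose f v ij.2 *
        (f (v + 1 + ij.1) * g ij.1 + f (u - ij.1) * g (ij.1 + 1)) := by
  have hpascal (ij : ℕ × ℕ) (hij : ij ∈ antidiagonal n) :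
      f (n + 1) * (genChoose f u ij.1 * genChoose f (v + 1) (ij.2 + 1) * g ij.1) =
        f ij.1 * genChoose f u ij.1 * genChoose f v (ij.2 + 1) * g ij.1 +
        genChoose f u ij.1 * genChoose f v ij.2 * (f (v + 1 + ij.1) * g ij.1) := by
    obtain rfl := mem_antidiagonal.1 hij
    have h := hf.genChoose_pascal (hne ij.2) v ((ij.1 + ij.2 : ℕ) + 1)
    have hleft : ((ij.1 + ij.2 : ℕ) + 1 : R) - (ij.2 + 1) = ij.1 := by push_cast; abel
    have hright : v - ij.2 + ((ij.1 + ij.2 : ℕ) + 1) = v + 1 + ij.1 := by push_cast; abel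
    rw [hleft, hright] at h
    linear_combination genChoose f u ij.1 * g ij.1 * h
  have hshift :
      ∑ ij ∈ antidiagonal (n + 1),
        f ij.1 * genChoose f u ij.1 * genChoose f v ij.2 * g ij.1 =
      ∑ ij ∈ antidiagonal n,
        genChoose f u ij.1 * genChoose f v ij.2 * (f (u - ij.1) * g (ij.1 + 1)) := by
    rw [Finset.Nat.sum_antidiagonal_succ]
    simp only [Nat.cast_zero, hf.map_zero, zero_mul, zero_add]
    refine Finset.sum_congr rfl fun ij _ => ?_
    push_cast
    linear_combination
      genChoose f v ij.2 * g (ij.1 + 1) * genChoose_succ_right_mul (hne ij.1) u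
  simp only [mul_add, Finset.sum_add_distrib]
  rw [← hshift, Finset.mul_sum, Finset.Nat.sum_antidiagonal_succ',
    Finset.Nat.sum_antidiagonal_succ', Finset.sum_congr rfl hpascal, Finset.sum_add_distrib]
  simp only [genChoose_zero_right, Nat.cast_succ]
  ring

theorem IsPtolemaic.sum_antidiagonal_genChoose (hf : IsPtolemaic f)
    (hne : ∀ n : ℕ, f (n + 1) ≠ 0) (r s : R) (m n : ℕ) :
    ∑ ij ∈ antidiagonal n, genChoose f (m - r + s) ij.1 * genChoose f (n + r - s) ij.2 *
        genChoose f (r + ij.1) (m + n) =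
      genChoose f r m * genChoose f s n := by
  induction n with
  | zero => simp
  | succ n ih =>
    have hpascal (i : ℕ) :
        f (n + r - s + 1 + i) * genChoose f (r + i) (m + (n + 1)) +
          f (m - r + s - i) * genChoose f (r + (i + 1 : ℕ)) (m + (n + 1)) =
        f (s - n) * genChoose f (r + i) (m + n) := by
      have h := hf.genChoose_pascal (hne (m + n)) (r + i) (m - r + s - i)
      have hleft : m - r + s - i - ((m + n : ℕ) + 1) = -(n + r - s + 1 + i) := by push_cast; abel
      have hright : r + i - (m + n : ℕ) + (m - r + s - i) = s - n := by push_cast; abel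
      rw [hleft, hright, hf.map_neg] at h
      rw [Nat.cast_succ, ← add_assoc r, ← add_assoc m]
      linear_combination h
    have hupper : (n + 1 : ℕ) + r - s = n + r - s + 1 := by push_cast; abel
    refine mul_left_cancel₀ (hne n) ?_
    rw [hupper, hf.mul_sum_antidiagonal_succ hne _ _ n fun i => genChoose f (r + i) (m + (n + 1))]
    simp only [hpascal]
    calc ∑ ij ∈ antidiagonal n, genChoose f (m - r + s) ij.1 *
          genChoose f (n + r - s) ij.2 * (f (s - n) * genChoose f (r + ij.1) (m + n))
        = f (s - n) * (genChoose f r m * genChoose f s n) := by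
          rw [← ih, Finset.mul_sum]
          exact Finset.sum_congr rfl fun _ _ => by ring
      _ = f (n + 1) * (genChoose f r m * genChoose f s (n + 1)) := by
          linear_combination -genChoose f r m * genChoose_succ_right_mul (hne n) s

theorem IsPtolemaic.genChoose_mul_genChoose (hf : IsPtolemaic f)
    (hne : ∀ n : ℕ, f (n + 1) ≠ 0) (r : R) (m n : ℕ) :
    genChoose f r m * genChoose f r n = ∑ k ∈ Finset.range (n + 1),
      genChoose f m k * genChoose f n k * genChoose f (r + k) (m + n) := by
  rw [← hf.sum_antidiagonal_genChoose hne r r m n, sub_add_cancel, add_sub_cancel_right,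
    ← Finset.Nat.sum_antidiagonal_eq_sum_range_succ_mk
      (f := fun ij => genChoose f m ij.1 * genChoose f n ij.1 * genChoose f (r + ij.1) (m + n))]
  refine Finset.sum_congr rfl fun ij hij => ?_
  rw [← mem_antidiagonal.1 hij, genChoose_symm_add hne]

theorem IsPtolemaic.sum_range_genChoose_div (hf : IsPtolemaic f)
    (hne : ∀ n : ℕ, f (n + 1) ≠ 0) (a b : ℕ) :
    ∑ j ∈ Finset.range (b + 1), genChoose f (a + b + 2 + j : ℕ) j * genChoose f a j *
        genChoose f (b + 1 : ℕ) (j + 1) / f (j + 1) =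
      genChoose f (a + b + 1 : ℕ) (a + 1) ^ 2 / f (b + 1) := by
  have hterm (j : ℕ) :
      genChoose f (a + 1 : ℕ) (j + 1) * genChoose f (b + 1 : ℕ) (j + 1) *
          genChoose f ((a + b + 1 : ℕ) + (j + 1 : ℕ)) (a + 1 + (b + 1)) =
        f (a + 1) * (genChoose f (a + b + 2 + j : ℕ) j * genChoose f a j *
          genChoose f (b + 1 : ℕ) (j + 1) / f (j + 1)) := by
    have habsorb := eq_div_of_mul_eq (hne j) (genChoose_add_one_succ_mul (hne j) (a : R))
    have hsymm : genChoose f ((a + b + 1 : ℕ) + (j + 1 : ℕ)) (a + 1 + (b + 1)) =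
        genChoose f (a + b + 2 + j : ℕ) j := by
      have hleft : a + b + 1 + (j + 1) = a + 1 + (b + 1) + j := by omega
      have hright : a + b + 2 + j = a + 1 + (b + 1) + j := by omega
      rw [← Nat.cast_add, hleft, hright, genChoose_symm_add hne]
    rw [hsymm, Nat.cast_succ a, habsorb]
    ring
  have hzero : genChoose f ((a + b + 1 : ℕ) + (0 : ℕ)) (a + 1 + (b + 1)) = 0 := by
    rw [← Nat.cast_add]
    exact genChoose_natCast_eq_zero hf.map_zero (by omega)
  have hsum : genChoose f (a + b + 1 : ℕ) (a + 1) * genChoose f (a + b + 1 : ℕ) (b + 1) =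
      f (a + 1) * ∑ j ∈ Finset.range (b + 1), genChoose f (a + b + 2 + j : ℕ) j *
        genChoose f a j * genChoose f (b + 1 : ℕ) (j + 1) / f (j + 1) := by
    rw [hf.genChoose_mul_genChoose hne, Finset.sum_range_succ', hzero, mul_zero, add_zero,
      Finset.mul_sum]
    exact Finset.sum_congr rfl fun j _ => hterm j
  refine eq_div_of_mul_eq (hne b) (mul_left_cancel₀ (hne a) ?_)
  linear_combination -f (b + 1) * hsum
    - genChoose f (a + b + 1 : ℕ) (a + 1) * genChoose_succ_mul_symm hne a b

end GenChoose

section Integer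

variable {K : Type*} [Field K] {f : ℤ → K}

/-- The variant of `genChoose` for integer arguments that vanishes outside `0 ≤ k ≤ n`, so that
`qbinom q` is `genBinom (qint q)`. -/
noncomputable def genBinom (f : ℤ → K) (n k : ℤ) : K :=
  if 0 ≤ k ∧ k ≤ n then
    (∏ i ∈ Finset.range k.toNat, f (n - (i : ℤ))) / ∏ i ∈ Finset.range k.toNat, f (k - (i : ℤ))
  else 0

theorem genBinom_natCast (h0 : f 0 = 0) (n k : ℕ) : genBinom f n k = genChoose f n k := by
  rcases le_or_gt k n with hkn | hnk
  · have hden := prod_range_sub_eq_prod_range_add f k 0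
    simp only [add_zero, zero_add] at hden
    rw [genBinom, if_pos (by omega), Int.toNat_natCast, hden, genChoose, Finset.prod_div_distrib]
  · rw [genBinom, if_neg (by omega), genChoose_natCast_eq_zero h0 hnk]

theorem sum_Icc_one_eq_sum_range {M : Type*} [AddCommMonoid M] (g : ℤ → M) (n : ℕ) :
    ∑ k ∈ Finset.Icc (1 : ℤ) n, g k = ∑ j ∈ Finset.range n, g (j + 1) := by
  simp [Int.Icc_eq_finset_map, add_comm]

theorem final_sum_F0_general (hf : IsPtolemaic f) (hne : ∀ n : ℕ, f (n + 1) ≠ 0)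
    (d1 d2 : ℤ) (hd1 : 1 ≤ d1) (hd2 : 1 ≤ d2) :
    ∑ k0 ∈ Finset.Icc (1 : ℤ) (min d1 d2),
      f (2 * d1 + d2) / f k0 * genBinom f (d1 + d2 + k0 - 1) (k0 - 1) *
        genBinom f (d1 - 1) (k0 - 1) * genBinom f d2 k0 =
      f (2 * d1 + d2) / f d2 * genBinom f (d1 + d2 - 1) d1 ^ 2 := by
  obtain ⟨a, rfl⟩ : ∃ a : ℕ, d1 = (a + 1 : ℕ) := ⟨(d1 - 1).toNat, by omega⟩
  obtain ⟨b, rfl⟩ : ∃ b : ℕ, d2 = (b + 1 : ℕ) := ⟨(d2 - 1).toNat, by omega⟩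
  have hextend : Finset.Icc (1 : ℤ) (min (a + 1 : ℕ) (b + 1 : ℕ)) ⊆ Finset.Icc 1 (b + 1 : ℕ) :=
    Finset.Icc_subset_Icc_right (min_le_right _ _)
  rw [Finset.sum_subset hextend, sum_Icc_one_eq_sum_range]
  · have hupper : ((a + 1 : ℕ) : ℤ) + (b + 1 : ℕ) - 1 = (a + b + 1 : ℕ) := by omega
    rw [hupper, genBinom_natCast hf.map_zero, div_mul_eq_mul_div, mul_div_assoc, Nat.cast_succ b,
      ← hf.sum_range_genChoose_div hne, Finset.mul_sum]
    refine Finset.sum_congr rfl fun j _ => ?_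
    have htop : ((a + 1 : ℕ) : ℤ) + (b + 1) + (j + 1) - 1 = (a + b + 2 + j : ℕ) := by omega
    have hleft : ((a + 1 : ℕ) : ℤ) - 1 = a := by omega
    rw [htop, hleft, add_sub_cancel_right, ← Nat.cast_succ b, ← Nat.cast_succ j]
    simp only [genBinom_natCast hf.map_zero]
    ring
  · intro k hk hk'
    have hlt : ¬ k - 1 ≤ ((a + 1 : ℕ) : ℤ) - 1 := by
      simp only [Finset.mem_Icc] at hk hk'
      omega
    rw [genBinom.eq_def f (((a + 1 : ℕ) : ℤ) - 1), if_neg fun h => hlt h.2, mul_zero, zero_mul]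

end Integer

theorem isPtolemaic_qint {q : ℝ} (hq0 : 0 < q) : IsPtolemaic (qint q) := by
  intro x y z
  simp only [qint, Int.cast_add, add_div, neg_add, Real.rpow_add hq0, Real.rpow_neg hq0.le]
  have hpow (n : ℤ) : q ^ ((n : ℝ) / 2) ≠ 0 := (Real.rpow_pos_of_pos hq0 _).ne'
  field_simp [hpow]
  ring

theorem qint_ne_zero_s7 {q : ℝ} (hq0 : 0 < q) (hq1 : q ≠ 1) {n : ℤ} (hn : n ≠ 0) :
    qint q n ≠ 0 := by
  rw [qint, sub_ne_zero, Ne, Real.rpow_right_inj hq0 hq1, self_eq_neg]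
  exact div_ne_zero (Int.cast_ne_zero.2 hn) two_ne_zero

/-- The `q`-binomial identity (evaluated via the `q`-Pfaff–Saalschütz summation) to
which Theorem 3 of the paper reduces after substituting the closed form of `f`:
for integers `d1 ≥ 1` and `d2 ≥ 1`,
`∑_{k0=1}^{min(d1,d2)} ([2d1+d2]_q/[k0]_q) [d1+d2+k0-1 choose k0-1]_q
   [d1-1 choose k0-1]_q [d2 choose k0]_q
 = ([2d1+d2]_q/[d2]_q) ([d1+d2-1 choose d1]_q)²`. -/
theorem final_sum_F0 (q : ℝ) (hq0 : 0 < q) (hq1 : q ≠ 1)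
    (d1 d2 : ℤ) (hd1 : 1 ≤ d1) (hd2 : 1 ≤ d2) :
    (∑ k0 ∈ Finset.Icc (1 : ℤ) (min d1 d2),
      qint q (2 * d1 + d2) / qint q k0 * qbinom q (d1 + d2 + k0 - 1) (k0 - 1) *
        qbinom q (d1 - 1) (k0 - 1) * qbinom q d2 k0)
    = qint q (2 * d1 + d2) / qint q d2 * (qbinom q (d1 + d2 - 1) d1) ^ 2 :=
  final_sum_F0_general (isPtolemaic_qint hq0) (fun _ => qint_ne_zero_s7 hq0 hq1 (by omega))
    d1 d2 hd1 hd2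
end
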